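/- (Ahlfors–Schwarz lemma, current form) Let c : ℂ → ℝ≥0 be a function which locally is of the form φ·|f|², where φ is a smooth positive function and f a holomorphic function, and assume c is not identically zero. Then there is no positive real number ρ such that ∂_t ∂_{t̄} log c(t) ≥ ρ · c(t) holds on all of ℂ in the sense of currents (equivalently, in the sense of distributions). -/

import Mathlib

open MeasureTheory

/-- The Laplacian of a real-valued function on ℂ; note `∂_t ∂_{t̄} = (1/4)·Δ`. -/
noncomputable def lapC (φ : ℂ → ℝ) (t : ℂ) : ℝ :=
  fderiv ℝ (fun s => fderiv ℝ φ s 1) t 1 +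
    fderiv ℝ (fun s => fderiv ℝ φ s Complex.I) t Complex.I

/-- A real test function on ℂ: smooth with compact support. -/
def IsTestFun (φ : ℂ → ℝ) : Prop := ContDiff ℝ (⊤ : ℕ∞) φ ∧ HasCompactSupport φ

open Topology

/-- The derivative of a smooth function in a fixed direction is smooth. -/
theorem ContDiff.fderiv_apply_const {g : ℂ → ℝ} (hg : ContDiff ℝ (⊤ : ℕ∞) g) (v : ℂ) :
    ContDiff ℝ (⊤ : ℕ∞) (fun s => fderiv ℝ g s v) :=
  (hg.fderiv_right (m := (⊤ : ℕ∞)) (by simp)).clm_apply contDiff_const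

theorem continuous_lapC {g : ℂ → ℝ} (hg : ContDiff ℝ (⊤ : ℕ∞) g) : Continuous (lapC g) :=
  (((hg.fderiv_apply_const 1).fderiv_apply_const 1).continuous).add
    (((hg.fderiv_apply_const Complex.I).fderiv_apply_const Complex.I).continuous)

/-- Integration by parts in a fixed direction. -/
theorem integral_mul_fderiv_eq_neg_of_contDiff {g ψ : ℂ → ℝ} (hg : ContDiff ℝ (⊤ : ℕ∞) g)
    (hψ : ContDiff ℝ (⊤ : ℕ∞) ψ) (hc : HasCompactSupport ψ) (v : ℂ) :
    ∫ t, g t * fderiv ℝ ψ t v = -∫ t, fderiv ℝ g t v * ψ t := by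
  have hψ' : HasCompactSupport (fun t => fderiv ℝ ψ t v) := hc.fderiv_apply ℝ v
  refine integral_mul_fderiv_eq_neg_fderiv_mul_of_integrable ?_ ?_ ?_
    (fun x _ => hg.differentiable (by simp) x) (fun x _ => hψ.differentiable (by simp) x)
  · exact ((hg.fderiv_apply_const v).continuous.mul hψ.continuous).integrable_of_hasCompactSupport
      hc.mul_left
  · exact (hg.continuous.mul (hψ.fderiv_apply_const v).continuous).integrable_of_hasCompactSupport
      hψ'.mul_left
  · exact (hg.continuous.mul hψ.continuous).integrable_of_hasCompactSupport hc.mul_left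

theorem integral_mul_fderiv_fderiv {g ψ : ℂ → ℝ} (hg : ContDiff ℝ (⊤ : ℕ∞) g)
    (hψ : ContDiff ℝ (⊤ : ℕ∞) ψ) (hc : HasCompactSupport ψ) (v : ℂ) :
    ∫ t, g t * fderiv ℝ (fun s => fderiv ℝ ψ s v) t v =
      ∫ t, fderiv ℝ (fun s => fderiv ℝ g s v) t v * ψ t := by
  rw [integral_mul_fderiv_eq_neg_of_contDiff hg (hψ.fderiv_apply_const v) (hc.fderiv_apply ℝ v) v,
    integral_mul_fderiv_eq_neg_of_contDiff (hg.fderiv_apply_const v) hψ hc v, neg_neg]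

/-- The Laplacian is symmetric with respect to the integral pairing. -/
theorem integral_mul_lapC {g ψ : ℂ → ℝ} (hg : ContDiff ℝ (⊤ : ℕ∞) g) (hψ : IsTestFun ψ) :
    ∫ t, g t * lapC ψ t = ∫ t, lapC g t * ψ t := by
  obtain ⟨hψ, hc⟩ := hψ
  simp only [lapC, mul_add, add_mul]
  have left (v : ℂ) : Integrable (fun t => g t * fderiv ℝ (fun s => fderiv ℝ ψ s v) t v) :=
    (hg.continuous.mul
      ((hψ.fderiv_apply_const v).fderiv_apply_const v).continuous).integrable_of_hasCompactSupport
        ((hc.fderiv_apply ℝ v).fderiv_apply ℝ v).mul_left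
  have right (v : ℂ) : Integrable (fun t => fderiv ℝ (fun s => fderiv ℝ g s v) t v * ψ t) :=
    (((hg.fderiv_apply_const v).fderiv_apply_const v).continuous.mul
      hψ.continuous).integrable_of_hasCompactSupport hc.mul_left
  rw [integral_add (left _) (left _), integral_add (right _) (right _),
    integral_mul_fderiv_fderiv hg hψ hc, integral_mul_fderiv_fderiv hg hψ hc]

/-- The Laplacian of a function vanishes off its closed support. -/
theorem lapC_eq_zero_of_notMem_tsupport {ψ : ℂ → ℝ} {t : ℂ} (ht : t ∉ tsupport ψ) :
    lapC ψ t = 0 := by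
  have h (v : ℂ) : fderiv ℝ (fun s => fderiv ℝ ψ s v) t v = 0 := by
    have h1 : t ∉ tsupport (fun s => fderiv ℝ ψ s v) :=
      fun h => ht (tsupport_fderiv_apply_subset ℝ v h)
    exact image_eq_zero_of_notMem_tsupport (f := fun s => fderiv ℝ (fun s => fderiv ℝ ψ s v) s v)
      (fun h => h1 (tsupport_fderiv_apply_subset ℝ v h))
  simp [lapC, h]

/-- A function locally of the form `φ * ‖f‖ ^ 2`, with `φ` smooth and `f` holomorphic, is smooth. -/
theorem contDiffAt_of_eq_mul_norm_sq {c φ : ℂ → ℝ} {f : ℂ → ℂ} {U : Set ℂ} {t₀ : ℂ}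
    (hU : U ∈ 𝓝 t₀) (hφ : ContDiffOn ℝ (⊤ : ℕ∞) φ U) (hf : DifferentiableOn ℂ f U)
    (hc : ∀ t ∈ U, c t = φ t * ‖f t‖ ^ 2) : ContDiffAt ℝ (⊤ : ℕ∞) c t₀ := by
  have hf' : ContDiffAt ℝ (⊤ : ℕ∞) f t₀ :=
    (hf.analyticAt hU).contDiffAt.restrict_scalars ℝ
  refine ((hφ.contDiffAt hU).mul (hf'.norm_sq ℝ)).congr_of_eventuallyEq ?_
  filter_upwards [hU] with t ht using hc t ht

/-- Where `c` is positive, the distributional inequality holds pointwise for `log c`, expressed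
through a globally smooth function that agrees with `log c` near the point. -/
theorem exists_eventuallyEq_log_and_le_lapC {c : ℂ → ℝ} {ρ : ℝ} (hc0 : ∀ t, 0 ≤ c t)
    (hc : ContDiff ℝ (⊤ : ℕ∞) c)
    (hρ : ∀ ψ : ℂ → ℝ, IsTestFun ψ → (∀ t, 0 ≤ ψ t) →
      ρ * ∫ t : ℂ, c t * ψ t ≤ (1 / 4) * ∫ t : ℂ, Real.log (c t) * lapC ψ t)
    {t₀ : ℂ} (ht₀ : 0 < c t₀) :
    ∃ g : ℂ → ℝ, ContDiff ℝ (⊤ : ℕ∞) g ∧ g =ᶠ[𝓝 t₀] (fun t => Real.log (c t)) ∧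
      4 * ρ * c t₀ ≤ lapC g t₀ := by
  obtain ⟨r, hr, hball⟩ := Metric.mem_nhds_iff.1
    (hc.continuous.continuousAt.eventually (eventually_gt_nhds ht₀))
  let χ : ContDiffBump t₀ := ⟨r / 2, r, by linarith, by linarith⟩
  have hpos (t : ℂ) : 0 < c t + (1 - χ t) := by
    by_cases ht : t ∈ Metric.ball t₀ r
    · have : 0 < c t := hball ht
      linarith [χ.le_one (x := t)]
    · have : χ t = 0 := χ.zero_of_le_dist (by simpa using ht)
      linarith [hc0 t]
  have heq {t : ℂ} (ht : t ∈ Metric.ball t₀ (r / 2)) :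
      Real.log (c t + (1 - χ t)) = Real.log (c t) := by
    rw [χ.one_of_mem_closedBall (Metric.ball_subset_closedBall ht), sub_self, add_zero]
  have hV : Metric.ball t₀ (r / 2) ∈ 𝓝 t₀ := Metric.ball_mem_nhds _ (by linarith)
  have hg : ContDiff ℝ (⊤ : ℕ∞) (fun t => Real.log (c t + (1 - χ t))) :=
    (hc.add (contDiff_const.sub χ.contDiff)).log (fun t => (hpos t).ne')
  refine ⟨_, hg, by filter_upwards [hV] with t ht using heq ht, ?_⟩
  set g : ℂ → ℝ := fun t => Real.log (c t + (1 - χ t))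
  by_contra! hlt
  have hD : Continuous (fun t => 4 * ρ * c t - lapC g t) :=
    (continuous_const.mul hc.continuous).sub (continuous_lapC hg)
  have hDpos : ∀ᶠ t in 𝓝 t₀, 0 < 4 * ρ * c t - lapC g t :=
    hD.continuousAt.eventually (eventually_gt_nhds (by linarith))
  obtain ⟨ψ, hsub, hψc, hψ, hrange, hψ1⟩ :=
    exists_contDiff_tsupport_subset (n := ⊤) (Filter.inter_mem hV hDpos)
  have hψ0 (t : ℂ) : 0 ≤ ψ t := (hrange ⟨t, rfl⟩).1
  have hint := hρ ψ ⟨hψ, hψc⟩ hψ0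
  have hlog : ∫ t, Real.log (c t) * lapC ψ t = ∫ t, lapC g t * ψ t := by
    rw [← integral_mul_lapC hg ⟨hψ, hψc⟩]
    refine integral_congr_ae (.of_forall fun t => ?_)
    by_cases ht : t ∈ tsupport ψ
    · simp only [g, heq (hsub ht).1]
    · simp only [lapC_eq_zero_of_notMem_tsupport ht, mul_zero]
  have hpos' : 0 < ∫ t, (4 * ρ * c t - lapC g t) * ψ t := by
    refine (hD.mul hψ.continuous).integral_pos_of_hasCompactSupport_nonneg_nonzero (x := t₀)
      hψc.mul_left (fun t => ?_) ?_
    · by_cases ht : t ∈ tsupport ψ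
      · exact mul_nonneg (hsub ht).2.le (hψ0 t)
      · simp [image_eq_zero_of_notMem_tsupport ht]
    · rw [hψ1, mul_one]
      linarith
  have hsplit : ∫ t, (4 * ρ * c t - lapC g t) * ψ t =
      4 * ρ * (∫ t, c t * ψ t) - ∫ t, lapC g t * ψ t := by
    rw [← integral_const_mul, ← integral_sub]
    · exact integral_congr_ae (.of_forall fun t => by ring)
    · exact ((hc.continuous.mul hψ.continuous).integrable_of_hasCompactSupport
        hψc.mul_left).const_mul _
    · exact ((continuous_lapC hg).mul hψ.continuous).integrable_of_hasCompactSupport hψc.mul_left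
  rw [hlog] at hint
  linarith

/-- The second derivative at a local maximum is nonpositive. -/
theorem IsLocalMax.nonpos_of_hasDerivAt {h h' : ℝ → ℝ} {a h'' : ℝ} (hmax : IsLocalMax h a)
    (hh : ∀ᶠ x in 𝓝 a, HasDerivAt h (h' x) x) (hh' : HasDerivAt h' h'' a) : h'' ≤ 0 := by
  by_contra! hpos
  have hd : deriv h =ᶠ[𝓝 a] h' := hh.mono fun x hx => hx.deriv
  have hdd : deriv (deriv h) a = h'' := by rw [hd.deriv_eq, hh'.deriv]
  have hmin : IsLocalMin h a := isLocalMin_of_deriv_deriv_pos (by rw [hdd]; exact hpos)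
    hmax.deriv_eq_zero hh.self_of_nhds.continuousAt
  have hconst : h =ᶠ[𝓝 a] fun _ => h a := by
    filter_upwards [hmax, hmin] with x h1 h2 using le_antisymm h1 h2
  have : deriv (deriv h) a = 0 := by
    rw [hconst.deriv.deriv_eq]
    simp
  linarith

/-- If `g + 2 log q` has a local maximum along a line on which `q` is the quadratic polynomial
`A - 2 B x - x ^ 2`, then the second derivative of `g` in that direction is controlled. -/
theorem fderiv_fderiv_le_of_isLocalMax {g : ℂ → ℝ} (hg : ContDiff ℝ (⊤ : ℕ∞) g) {t v : ℂ}
    {A B : ℝ} (hA : 0 < A)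
    (hmax : IsLocalMax (fun x : ℝ => g (t + x • v) + 2 * Real.log (A - 2 * B * x - x ^ 2)) 0) :
    fderiv ℝ (fun s => fderiv ℝ g s v) t v ≤ (4 * A + 8 * B ^ 2) / A ^ 2 := by
  have hline (x : ℝ) : HasDerivAt (fun x : ℝ => t + x • v) v x := by
    simpa using ((hasDerivAt_id x).smul_const v).const_add t
  have hcomp {F : ℂ → ℝ} (hF : ContDiff ℝ (⊤ : ℕ∞) F) (x : ℝ) :
      HasDerivAt (fun x : ℝ => F (t + x • v)) (fderiv ℝ F (t + x • v) v) x :=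
    (hF.differentiable (by simp) (t + x • v)).hasFDerivAt.comp_hasDerivAt x (hline x)
  have hq (x : ℝ) : HasDerivAt (fun x : ℝ => A - 2 * B * x - x ^ 2) (-(2 * B) - 2 * x) x :=
    ((((hasDerivAt_id x).const_mul (2 * B)).const_sub A).sub
      ((hasDerivAt_id x).pow 2)).congr_deriv (by simp)
  have hqpos : ∀ᶠ x : ℝ in 𝓝 0, 0 < A - 2 * B * x - x ^ 2 :=
    (hq 0).continuousAt.eventually (eventually_gt_nhds (by simpa using hA))
  have hlin : HasDerivAt (fun x : ℝ => -(2 * B) - 2 * x) (-2) 0 := by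
    simpa using ((hasDerivAt_id (0 : ℝ)).const_mul 2).const_sub (-(2 * B))
  have key := hmax.nonpos_of_hasDerivAt
    (h' := fun x => fderiv ℝ g (t + x • v) v +
      2 * ((-(2 * B) - 2 * x) / (A - 2 * B * x - x ^ 2)))
    (hqpos.mono fun x hx => (hcomp hg x).add (((hq x).log hx.ne').const_mul 2))
    ((hcomp (hg.fderiv_apply_const v) 0).add
      ((hlin.div (hq 0) (by simpa using hA.ne')).const_mul 2))
  have hrat : (4 * A + 8 * B ^ 2) / A ^ 2 =
      -(2 * ((-2 * A - -(2 * B) * -(2 * B)) / A ^ 2)) := by ring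
  rw [hrat]
  simp only [zero_smul, add_zero, mul_zero, sub_zero, ne_eq, OfNat.ofNat_ne_zero,
    not_false_eq_true, zero_pow] at key
  linarith

/- STATEMENT 5 (Ahlfors–Schwarz lemma, current form): Let c : ℂ → ℝ≥0 be locally of the
form φ·|f|² with φ smooth positive and f holomorphic, and c not identically zero.  Then
there is no ρ > 0 with ∂_t∂_{t̄} log c ≥ ρ·c in the sense of currents (distributions),
i.e. such that for every nonnegative test function ψ one has
  (1/4)∫ log c · Δψ ≥ ρ ∫ c·ψ. -/
theorem stmt_5 (c : ℂ → ℝ) (hc0 : ∀ t, 0 ≤ c t)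
    (hloc : ∀ t₀ : ℂ, ∃ U ∈ nhds t₀, ∃ φ : ℂ → ℝ, ∃ f : ℂ → ℂ,
      ContDiffOn ℝ (⊤ : ℕ∞) φ U ∧ (∀ t ∈ U, 0 < φ t) ∧ DifferentiableOn ℂ f U ∧
      ∀ t ∈ U, c t = φ t * ‖f t‖ ^ 2)
    (hne : ∃ t, c t ≠ 0) :
    ¬ ∃ ρ : ℝ, 0 < ρ ∧ ∀ ψ : ℂ → ℝ, IsTestFun ψ → (∀ t, 0 ≤ ψ t) →
      ρ * ∫ t : ℂ, c t * ψ t ≤ (1 / 4) * ∫ t : ℂ, Real.log (c t) * lapC ψ t := by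
  rintro ⟨ρ, hρ0, hρ⟩
  have hc : ContDiff ℝ (⊤ : ℕ∞) c := contDiff_iff_contDiffAt.2 fun t => by
    obtain ⟨U, hU, φ, f, hφ, -, hf, heq⟩ := hloc t
    exact contDiffAt_of_eq_mul_norm_sq hU hφ hf heq
  obtain ⟨a, ha⟩ := hne
  have ha : 0 < c a := (hc0 a).lt_of_ne' ha
  obtain ⟨R, hR0, hR⟩ : ∃ R : ℝ, 0 < R ∧ 2 < c a * ρ * R ^ 2 := by
    refine ⟨√(3 / (c a * ρ)), by positivity, ?_⟩
    rw [Real.sq_sqrt (by positivity), mul_div_cancel₀ _ (by positivity)]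
    norm_num
  -- maximize `c * (R ^ 2 - ‖· - a‖ ^ 2) ^ 2` over the closed disc of radius `R` around `a`
  obtain ⟨m, hm, hmax⟩ := (isCompact_closedBall a R).exists_isMaxOn
    ⟨a, Metric.mem_closedBall_self hR0.le⟩
    (f := fun t => c t * (R ^ 2 - ‖t - a‖ ^ 2) ^ 2)
    (hc.continuous.mul (by fun_prop)).continuousOn
  have hma : c a * (R ^ 2) ^ 2 ≤ c m * (R ^ 2 - ‖m - a‖ ^ 2) ^ 2 := by
    simpa using hmax (Metric.mem_closedBall_self hR0.le)
  have hprod : 0 < c m * (R ^ 2 - ‖m - a‖ ^ 2) ^ 2 := lt_of_lt_of_le (by positivity) hma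
  have hcm : 0 < c m := (hc0 m).lt_of_ne' (by rintro h; simp [h] at hprod)
  set A := R ^ 2 - ‖m - a‖ ^ 2 with hAdef
  have hle : ‖m - a‖ ≤ R := by simpa [dist_eq_norm] using hm
  have hA : 0 < A := by
    refine lt_of_le_of_ne' (sub_nonneg.2 (by gcongr)) ?_
    rintro h
    simp [h] at hprod
  have hlt : ‖m - a‖ < R := lt_of_pow_lt_pow_left₀ 2 hR0.le (sub_pos.1 hA)
  obtain ⟨g, hg, hgeq, hglap⟩ := exists_eventuallyEq_log_and_le_lapC hc0 hc hρ hcm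
  have hball : ∀ᶠ t in 𝓝 m, t ∈ Metric.ball a R :=
    Metric.isOpen_ball.mem_nhds (by simpa [dist_eq_norm] using hlt)
  have hlocmax : IsLocalMax (fun t => g t + 2 * Real.log (R ^ 2 - ‖t - a‖ ^ 2)) m := by
    have hlog {t : ℂ} (h1 : 0 < c t) (h2 : 0 < R ^ 2 - ‖t - a‖ ^ 2) :
        Real.log (c t) + 2 * Real.log (R ^ 2 - ‖t - a‖ ^ 2) =
          Real.log (c t * (R ^ 2 - ‖t - a‖ ^ 2) ^ 2) := by
      rw [Real.log_mul h1.ne' (by positivity), Real.log_pow]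
      norm_num
    filter_upwards [hball, hgeq, hc.continuous.continuousAt.eventually (eventually_gt_nhds hcm)]
      with t ht hgt hct
    have ht' : 0 < R ^ 2 - ‖t - a‖ ^ 2 := by
      rw [Metric.mem_ball, dist_eq_norm] at ht
      exact sub_pos.2 (by gcongr)
    rw [hgt, hgeq.self_of_nhds, hlog hct ht', hlog hcm hA]
    exact Real.log_le_log (by positivity) (hmax (Metric.ball_subset_closedBall ht))
  have hline {v : ℂ} {B : ℝ}
      (hv : ∀ x : ℝ, R ^ 2 - ‖m + x • v - a‖ ^ 2 = A - 2 * B * x - x ^ 2) :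
      fderiv ℝ (fun s => fderiv ℝ g s v) m v ≤ (4 * A + 8 * B ^ 2) / A ^ 2 := by
    refine fderiv_fderiv_le_of_isLocalMax hg hA ?_
    have hcont : ContinuousAt (fun x : ℝ => m + x • v) 0 := by fun_prop
    have hlocmax' : IsLocalMax (fun t => g t + 2 * Real.log (R ^ 2 - ‖t - a‖ ^ 2))
        (m + (0 : ℝ) • v) := by simpa using hlocmax
    simpa only [IsLocalMax, IsMaxFilter, hv] using hcont.eventually hlocmax'
  have h1 := hline (v := 1) (B := (m - a).re) fun x => by
    simp only [hAdef, Complex.sq_norm, Complex.normSq_apply]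
    simp
    ring
  have h2 := hline (v := Complex.I) (B := (m - a).im) fun x => by
    simp only [hAdef, Complex.sq_norm, Complex.normSq_apply]
    simp
    ring
  have hnorm : ‖m - a‖ ^ 2 = (m - a).re ^ 2 + (m - a).im ^ 2 := by
    rw [Complex.sq_norm, Complex.normSq_apply]
    ring
  have hlap : lapC g m ≤ 8 * R ^ 2 / A ^ 2 := by
    refine (add_le_add h1 h2).trans_eq ?_
    rw [← add_div]
    congr 1
    linarith
  have hbound : 4 * ρ * c m * A ^ 2 ≤ 8 * R ^ 2 :=
    (le_div_iff₀ (by positivity)).1 (hglap.trans hlap)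
  nlinarith [mul_le_mul_of_nonneg_left hma hρ0.le, mul_lt_mul_of_pos_right hR (pow_pos hR0 2)]
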